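/- Let f, g ∈ L¹([0,π]) with cosine coefficients f_0, f_k (k ≥ 1) of f and sine coefficients g_k (k ≥ 1) of g. Then f has an absolutely continuous representative with f' = g almost everywhere if and only if g_k = -k·f_k for all k ≥ 1. -/

import Mathlib

open MeasureTheory Real intervalIntegral

/-! The function `G x = ∫₀ˣ g` is absolutely continuous, and integrating by parts against
`sin (k x)` gives `k ∫ G cos (k x) = -∫ g sin (k x)`, the boundary terms vanishing at `0` and `π`
(`mul_integral_primitive_mul_cos`). Hence, with `h = f - G`, the relation `g_k = -k f_k` for
`k ≥ 1` says precisely that the cosine coefficients of `h` of index `k ≥ 1` all vanish, whereas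
the existence of the representative `F` says that `h` is almost everywhere constant.

These two conditions on `h` agree by uniqueness of cosine series in `L¹`
(`ae_eq_zero_of_integral_mul_cos_eq_zero`): if all cosine coefficients vanish, the product formula
for cosines gives `∫ h p(cos x) = 0` for every polynomial `p`. A continuous `φ` on `[0, π]` is a
continuous function of `cos x`, so Weierstrass' theorem gives `∫ h φ = 0`, and `h = 0` almost
everywhere. -/

/-- Integration by parts for the primitive of a real integrable function. -/
lemma mul_integral_primitive_mul_cos_real (u : ℝ → ℝ) (hu : IntervalIntegrable u volume 0 π)
    (k : ℕ) :
    ∫ x in (0:ℝ)..π, (k * Real.cos (k * x)) * (∫ t in (0:ℝ)..x, u t)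
      = -∫ x in (0:ℝ)..π, Real.sin (k * x) * u x := by
  have hU : AbsolutelyContinuousOnInterval (fun x => ∫ t in (0:ℝ)..x, u t) 0 π :=
    hu.absolutelyContinuousOnInterval_intervalIntegral (by simp)
  have hS : AbsolutelyContinuousOnInterval (fun x : ℝ => Real.sin (k * x)) 0 π := by
    apply ContDiffOn.absolutelyContinuousOnInterval
    have : ContDiff ℝ 1 (fun x : ℝ => Real.sin (k * x)) := by fun_prop
    exact this.contDiffOn
  have hd : deriv (fun x : ℝ => Real.sin (k * x)) = fun x => k * Real.cos (k * x) := by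
    ext x
    have : HasDerivAt (fun x : ℝ => Real.sin (k * x)) (Real.cos (k * x) * (k * 1)) x :=
      ((hasDerivAt_id x).const_mul (k : ℝ)).sin
    rw [this.deriv]; ring
  have key := hS.integral_mul_deriv_eq_deriv_mul hU
  simp only [hd, Real.sin_nat_mul_pi, mul_zero, Real.sin_zero, zero_mul, sub_zero, zero_sub] at key
  refine eq_neg_of_add_eq_zero_right (eq_neg_iff_add_eq_zero.1 (Eq.trans ?_ key))
  apply intervalIntegral.integral_congr_ae
  filter_upwards [hu.ae_hasDerivAt_integral] with x hx hx'
  rw [(hx (Set.uIoc_subset_uIcc hx') 0 (by simp)).deriv]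

/-- Integration by parts: the sine coefficients of `g` in terms of the cosine coefficients of its
primitive. -/
lemma mul_integral_primitive_mul_cos (g : ℝ → ℂ) (hg : IntervalIntegrable g volume 0 π) (k : ℕ) :
    (k : ℂ) * ∫ x in (0:ℝ)..π, Real.cos (k * x) • (∫ t in (0:ℝ)..x, g t)
      = -∫ x in (0:ℝ)..π, Real.sin (k * x) • g x := by
  have hG : ContinuousOn (fun x => ∫ t in (0:ℝ)..x, g t) (Set.uIcc 0 π) :=
    intervalIntegral.continuousOn_primitive_interval' hg (by simp)
  have hI : IntervalIntegrable (fun x => (k * Real.cos (k * x)) • (∫ t in (0:ℝ)..x, g t))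
      volume 0 π := by
    apply ContinuousOn.intervalIntegrable
    exact ContinuousOn.smul (f := fun x => k * Real.cos (k * x)) (by fun_prop) hG
  have hJ : IntervalIntegrable (fun x => Real.sin (k * x) • g x) volume 0 π :=
    hg.continuousOn_smul (by fun_prop)
  have hL : ∀ L : ℂ →L[ℝ] ℝ,
      L (∫ x in (0:ℝ)..π, (k * Real.cos (k * x)) • (∫ t in (0:ℝ)..x, g t))
        = L (-∫ x in (0:ℝ)..π, Real.sin (k * x) • g x) := by
    intro L
    have hLg : IntervalIntegrable (fun t => L (g t)) volume 0 π :=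
      ⟨L.integrable_comp hg.1, L.integrable_comp hg.2⟩
    rw [map_neg, ← L.intervalIntegral_comp_comm hI, ← L.intervalIntegral_comp_comm hJ]
    simp only [map_smul, smul_eq_mul]
    rw [← mul_integral_primitive_mul_cos_real _ hLg]
    apply intervalIntegral.integral_congr
    intro x hx
    simp only
    rw [L.intervalIntegral_comp_comm
      (hg.mono_set (Set.uIcc_subset_uIcc_left hx))]
  have : (k : ℂ) * ∫ x in (0:ℝ)..π, Real.cos (k * x) • (∫ t in (0:ℝ)..x, g t)
      = ∫ x in (0:ℝ)..π, (k * Real.cos (k * x)) • (∫ t in (0:ℝ)..x, g t) := by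
    rw [← intervalIntegral.integral_const_mul]
    simp [mul_assoc]
  rw [this]
  exact Complex.ext (hL Complex.reCLM) (hL Complex.imCLM)

/-- The induction on `n` uses `cos x cos (k x) = (cos ((k + 1) x) + cos ((k - 1) x)) / 2`; integer
frequencies avoid a special case at `k = 0`. -/
lemma integral_cos_pow_smul_eq_zero (h : ℝ → ℂ) (hh : IntervalIntegrable h volume 0 π)
    (h0 : ∀ k : ℤ, ∫ x in (0:ℝ)..π, Real.cos (k * x) • h x = 0) (n : ℕ) :
    ∀ k : ℤ, ∫ x in (0:ℝ)..π, (Real.cos x ^ n * Real.cos (k * x)) • h x = 0 := by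
  induction n with
  | zero => simpa using h0
  | succ n ih =>
    intro k
    have e : ∀ x : ℝ, (Real.cos x ^ (n + 1) * Real.cos (k * x)) • h x
        = (1 / 2 : ℝ) • ((Real.cos x ^ n * Real.cos ((k + 1 : ℤ) * x)) • h x
          + (Real.cos x ^ n * Real.cos ((k - 1 : ℤ) * x)) • h x) := by
      intro x
      rw [← add_smul, smul_smul]
      congr 1
      push_cast
      rw [add_mul, sub_mul, one_mul, Real.cos_add, Real.cos_sub]
      ring
    simp_rw [e]
    rw [intervalIntegral.integral_smul, intervalIntegral.integral_add, ih, ih]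
    · simp
    · exact hh.continuousOn_smul (by fun_prop)
    · exact hh.continuousOn_smul (by fun_prop)

lemma integral_polynomial_cos_smul_eq_zero (h : ℝ → ℂ) (hh : IntervalIntegrable h volume 0 π)
    (h0 : ∀ k : ℤ, ∫ x in (0:ℝ)..π, Real.cos (k * x) • h x = 0) (p : Polynomial ℝ) :
    ∫ x in (0:ℝ)..π, p.eval (Real.cos x) • h x = 0 := by
  have hi : ∀ q : Polynomial ℝ,
      IntervalIntegrable (fun x => q.eval (Real.cos x) • h x) volume 0 π := fun q =>
    hh.continuousOn_smul (by fun_prop)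
  induction p using Polynomial.induction_on' with
  | add p q hp hq =>
    simp only [Polynomial.eval_add, add_smul]
    rw [intervalIntegral.integral_add (hi p) (hi q), hp, hq, add_zero]
  | monomial n a =>
    simp only [Polynomial.eval_monomial, mul_smul]
    rw [intervalIntegral.integral_smul]
    have := integral_cos_pow_smul_eq_zero h hh h0 n 0
    simp only [Int.cast_zero, zero_mul, Real.cos_zero, mul_one] at this
    rw [this, smul_zero]

/-- Polynomials in `cos x` are uniformly dense in the continuous functions on `[0, π]`, by
Weierstrass' theorem applied to `φ ∘ arccos`. -/
lemma integral_continuous_smul_eq_zero (h : ℝ → ℂ) (hh : IntervalIntegrable h volume 0 π)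
    (h0 : ∀ k : ℤ, ∫ x in (0:ℝ)..π, Real.cos (k * x) • h x = 0) (φ : ℝ → ℝ) (hφ : Continuous φ) :
    ∫ x in (0:ℝ)..π, φ x • h x = 0 := by
  set M := ∫ x in (0:ℝ)..π, ‖h x‖ with hM
  have hM0 : 0 ≤ M := intervalIntegral.integral_nonneg pi_nonneg fun _ _ => norm_nonneg _
  rw [← norm_le_zero_iff]
  apply le_of_forall_pos_le_add
  intro ε hε
  obtain ⟨p, hp⟩ := exists_polynomial_near_of_continuousOn (-1) 1 (φ ∘ Real.arccos)
    (hφ.comp Real.continuous_arccos).continuousOn (ε / (M + 1)) (by positivity)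
  have hi : IntervalIntegrable (fun x => p.eval (Real.cos x) • h x) volume 0 π :=
    hh.continuousOn_smul (by fun_prop)
  have hi' : IntervalIntegrable (fun x => φ x • h x) volume 0 π :=
    hh.continuousOn_smul hφ.continuousOn
  have e : ∫ x in (0:ℝ)..π, φ x • h x
      = ∫ x in (0:ℝ)..π, (φ x • h x - p.eval (Real.cos x) • h x) := by
    rw [intervalIntegral.integral_sub hi' hi, integral_polynomial_cos_smul_eq_zero h hh h0,
      sub_zero]
  rw [e, zero_add]
  calc _ ≤ ∫ x in (0:ℝ)..π, ε / (M + 1) * ‖h x‖ := by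
        apply intervalIntegral.norm_integral_le_of_norm_le pi_nonneg _ (hh.norm.const_mul _)
        filter_upwards with x hx
        rw [← sub_smul, norm_smul]
        gcongr
        have := hp (Real.cos x) ⟨Real.neg_one_le_cos x, Real.cos_le_one x⟩
        rw [Function.comp_apply, Real.arccos_cos hx.1.le hx.2] at this
        rw [Real.norm_eq_abs, abs_sub_comm]
        exact this.le
    _ = ε * (M / (M + 1)) := by
        rw [intervalIntegral.integral_const_mul, ← hM]; ring
    _ ≤ ε * 1 := by
        gcongr
        rw [div_le_one (by positivity)]; linarith
    _ = ε := mul_one _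

/-- Uniqueness of cosine series in `L¹`. -/
lemma ae_eq_zero_of_integral_mul_cos_eq_zero (h : ℝ → ℂ) (hh : IntervalIntegrable h volume 0 π)
    (h0 : ∀ k : ℤ, ∫ x in (0:ℝ)..π, Real.cos (k * x) • h x = 0) :
    ∀ᵐ x ∂(volume.restrict (Set.Ioc 0 π)), h x = 0 := by
  have hI : IntegrableOn h (Set.Ioc 0 π) :=
    (intervalIntegrable_iff_integrableOn_Ioc_of_le pi_nonneg).1 hh
  apply ae_eq_zero_of_integral_contDiff_smul_eq_zero (Integrable.locallyIntegrable hI)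
  intro φ hφ _
  rw [← intervalIntegral.integral_of_le pi_nonneg]
  exact integral_continuous_smul_eq_zero h hh h0 φ hφ.continuous

lemma integral_cos_natCast_mul (k : ℕ) (hk : 1 ≤ k) : ∫ x in (0:ℝ)..π, Real.cos (k * x) = 0 := by
  have : (k : ℝ) ≠ 0 := by positivity
  rw [intervalIntegral.integral_comp_mul_left (fun x => Real.cos x) this]
  simp

/-- An integrable function is almost everywhere constant on `[0, π]` exactly when its cosine
coefficients of positive index vanish. -/
lemma exists_ae_eq_const_iff (h : ℝ → ℂ) (hh : IntervalIntegrable h volume 0 π) :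
    (∃ c : ℂ, ∀ᵐ x ∂(volume.restrict (Set.Ioc 0 π)), h x = c) ↔
      ∀ k : ℕ, 1 ≤ k → ∫ x in (0:ℝ)..π, Real.cos (k * x) • h x = 0 := by
  constructor
  · rintro ⟨c, hc⟩ k hk
    have : ∫ x in (0:ℝ)..π, Real.cos (k * x) • h x = ∫ x in (0:ℝ)..π, Real.cos (k * x) • c := by
      rw [intervalIntegral.integral_of_le pi_nonneg, intervalIntegral.integral_of_le pi_nonneg]
      apply MeasureTheory.integral_congr_ae
      filter_upwards [hc] with x hx
      rw [hx]
    rw [this, intervalIntegral.integral_smul_const, integral_cos_natCast_mul k hk, zero_smul]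
  · intro H
    -- Subtracting the mean of `h` kills the coefficient of index `0` and changes no other.
    set c : ℂ := (π⁻¹ : ℝ) • ∫ x in (0:ℝ)..π, h x with hc
    have hnat : ∀ k : ℕ, ∫ x in (0:ℝ)..π, Real.cos (k * x) • (h x - c) = 0 := by
      intro k
      simp only [smul_sub]
      rw [intervalIntegral.integral_sub (hh.continuousOn_smul (by fun_prop))
        (Continuous.intervalIntegrable (by fun_prop) _ _), intervalIntegral.integral_smul_const]
      rcases Nat.eq_zero_or_pos k with rfl | hk
      · simp [hc, pi_ne_zero]
      · rw [H k hk, integral_cos_natCast_mul k hk, zero_smul, sub_zero]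
    refine ⟨c, ?_⟩
    have := ae_eq_zero_of_integral_mul_cos_eq_zero (fun x => h x - c)
      (hh.sub intervalIntegrable_const) (fun k => by
        rcases Int.natAbs_eq k with hk | hk <;> rw [hk]
        · simpa using hnat k.natAbs
        · simpa using hnat k.natAbs)
    filter_upwards [this] with x hx
    exact sub_eq_zero.1 hx

/-- For `f, g ∈ L¹([0,π])` with cosine coefficients `f_k` of `f` and sine coefficients
`g_k` of `g`: `f` has an absolutely continuous representative with `f' = g` a.e. iff
`g_k = -k f_k` for all `k ≥ 1`. -/
theorem stmt9 (f g : ℝ → ℂ)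
    (hf : IntegrableOn f (Set.Ioc 0 π)) (hg : IntegrableOn g (Set.Ioc 0 π)) :
    ((∃ F : ℝ → ℂ,
        (∀ᵐ x ∂(volume.restrict (Set.Ioc 0 π)), f x = F x) ∧
        (∀ x : ℝ, F x = F 0 + ∫ t in (0:ℝ)..x, g t)) ↔
      (∀ k : ℕ, 1 ≤ k →
        (1 / (π : ℂ)) * ∫ x in (0:ℝ)..π, g x * (Real.sqrt 2 * Real.sin (k * x) : ℝ)
          = -(k : ℂ) *
            ((1 / (π : ℂ)) * ∫ x in (0:ℝ)..π, f x * (Real.sqrt 2 * Real.cos (k * x) : ℝ)))) := by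
  have hf' : IntervalIntegrable f volume 0 π :=
    (intervalIntegrable_iff_integrableOn_Ioc_of_le pi_nonneg).2 hf
  have hg' : IntervalIntegrable g volume 0 π :=
    (intervalIntegrable_iff_integrableOn_Ioc_of_le pi_nonneg).2 hg
  have hG : IntervalIntegrable (fun x => ∫ t in (0:ℝ)..x, g t) volume 0 π :=
    (intervalIntegral.continuousOn_primitive_interval' hg' (by simp)).intervalIntegrable
  set h : ℝ → ℂ := fun x => f x - ∫ t in (0:ℝ)..x, g t with hh
  have hleft : (∃ F : ℝ → ℂ,
        (∀ᵐ x ∂(volume.restrict (Set.Ioc 0 π)), f x = F x) ∧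
        (∀ x : ℝ, F x = F 0 + ∫ t in (0:ℝ)..x, g t)) ↔
      ∃ c : ℂ, ∀ᵐ x ∂(volume.restrict (Set.Ioc 0 π)), h x = c := by
    constructor
    · rintro ⟨F, hF, hF'⟩
      refine ⟨F 0, ?_⟩
      filter_upwards [hF] with x hx
      rw [hh, sub_eq_iff_eq_add, hx, hF' x]
    · rintro ⟨c, hc⟩
      refine ⟨fun x => c + ∫ t in (0:ℝ)..x, g t, ?_, by simp⟩
      filter_upwards [hc] with x hx
      rw [← hx, hh, sub_add_cancel]
  rw [hleft, exists_ae_eq_const_iff h (hf'.sub hG)]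
  refine forall₂_congr fun k hk => ?_
  have hs : ∀ (u : ℝ → ℂ) (w : ℝ → ℝ),
      ∫ x in (0:ℝ)..π, u x * (Real.sqrt 2 * w x : ℝ)
        = (Real.sqrt 2 : ℂ) * ∫ x in (0:ℝ)..π, w x • u x := by
    intro u w
    rw [← intervalIntegral.integral_const_mul]
    congr 1; ext x
    rw [Complex.real_smul]; push_cast; ring
  rw [hs g (fun x => Real.sin (k * x)), hs f (fun x => Real.cos (k * x))]
  have hsub : ∫ x in (0:ℝ)..π, Real.cos (k * x) • h x
      = (∫ x in (0:ℝ)..π, Real.cos (k * x) • f x)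
        - ∫ x in (0:ℝ)..π, Real.cos (k * x) • ∫ t in (0:ℝ)..x, g t := by
    simp only [hh, smul_sub]
    exact intervalIntegral.integral_sub (hf'.continuousOn_smul (by fun_prop))
      (hG.continuousOn_smul (by fun_prop))
  have hparts := mul_integral_primitive_mul_cos g hg' k
  rw [hsub]
  generalize (∫ x in (0:ℝ)..π, Real.cos (k * x) • f x) = A at *
  generalize (∫ x in (0:ℝ)..π, Real.cos (k * x) • ∫ t in (0:ℝ)..x, g t) = B at *
  generalize (∫ x in (0:ℝ)..π, Real.sin (k * x) • g x) = S at *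
  have hS : S = -(k * B) := by rw [hparts, neg_neg]
  have hk0 : (k : ℂ) ≠ 0 := by exact_mod_cast (by omega : k ≠ 0)
  have hpi : (π : ℂ) ≠ 0 := by exact_mod_cast pi_ne_zero
  have hC : (1 / (π : ℂ)) * Real.sqrt 2 * k ≠ 0 := by simp [hk0, hpi]
  rw [hS]
  constructor
  · intro hAB
    rw [sub_eq_zero.1 hAB]; ring
  · intro hAB
    have : (1 / (π : ℂ)) * Real.sqrt 2 * k * (A - B) = 0 := by linear_combination hAB
    exact (mul_eq_zero.1 this).resolve_left hC
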